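/- arXiv:2211.04565 — 2 statements merged into one kernel-verified Lean document; each statement's English description precedes it below -/
import Mathlib

section
/- Let α>0 and 0≤θ<α. If W_α(x)=∫_0^x y^{α-1}(1−F(y))dy is regularly varying with index θ at infinity, then H_α(x)=∫_{[0,x]} y^α dF(y) is regularly varying with index θ at infinity. In particular (θ=0), if W_α is slowly varying then H_α is slowly varying. -/
open MeasureTheory Set Filter Topology

/-- The cumulative distribution function of a measure `μ` on `ℝ`. -/
noncomputable def distF (μ : Measure ℝ) (x : ℝ) : ℝ := (μ (Iic x)).toReal

/-- Truncated `α`-th moment `H_α(x) = ∫_{[0,x]} y^α dF(y)`. -/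
noncomputable def Htr (μ : Measure ℝ) (α x : ℝ) : ℝ := ∫ y in Iic x, y ^ α ∂μ

/-- `W_α(x) = ∫_0^x y^(α-1) (1 - F(y)) dy` (Lebesgue integral). -/
noncomputable def Wtr (μ : Measure ℝ) (α x : ℝ) : ℝ :=
  ∫ y in Ioc (0:ℝ) x, y ^ (α - 1) * (1 - distF μ y)

/-- The Williamson transform `G_α(x) = ∫_{[0,x]} (1 - (t/x)^α) dF(t)`. -/
noncomputable def Gw (μ : Measure ℝ) (α x : ℝ) : ℝ := ∫ t in Iic x, (1 - (t / x) ^ α) ∂μ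

/-- `g` is regularly varying at infinity with index `ρ`. -/
def RegVary (g : ℝ → ℝ) (ρ : ℝ) : Prop :=
  ∀ t : ℝ, 0 < t → Tendsto (fun x => g (t * x) / g x) atTop (𝓝 (t ^ ρ))

lemma distF_mono8 (μ : Measure ℝ) [IsProbabilityMeasure μ] : Monotone (distF μ) := by
  intro a b h
  exact ENNReal.toReal_mono (measure_ne_top _ _) (measure_mono (Iic_subset_Iic.2 h))

lemma distF_le_one8 (μ : Measure ℝ) [IsProbabilityMeasure μ] (x : ℝ) : distF μ x ≤ 1 := by
  have := ENNReal.toReal_mono ENNReal.one_ne_top (prob_le_one (μ := μ) (s := Iic x))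
  simpa [distF] using this

lemma distF_nonneg8 (μ : Measure ℝ) (x : ℝ) : 0 ≤ distF μ x := ENNReal.toReal_nonneg

lemma tail_eq8 (μ : Measure ℝ) [IsProbabilityMeasure μ] (x : ℝ) :
    μ (Ioi x) = ENNReal.ofReal (1 - distF μ x) := by
  have h : (Ioi x) = (Iic x)ᶜ := by simp
  rw [h, prob_compl_eq_one_sub measurableSet_Iic,
    ENNReal.ofReal_sub _ (distF_nonneg8 μ x), ENNReal.ofReal_one, distF,
    ENNReal.ofReal_toReal (measure_ne_top _ _)]

lemma int_rpow8 {α : ℝ} (hα : 0 < α) (a b : ℝ) :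
    IntervalIntegrable (fun y : ℝ => y ^ (α - 1)) volume a b :=
  intervalIntegral.intervalIntegrable_rpow' (by linarith)

lemma int_W8 (μ : Measure ℝ) [IsProbabilityMeasure μ] {α : ℝ} (hα : 0 < α) (a b : ℝ) :
    IntervalIntegrable (fun y : ℝ => y ^ (α - 1) * (1 - distF μ y)) volume a b := by
  have hm : Measurable (fun y => 1 - distF μ y) :=
    measurable_const.sub (distF_mono8 μ).measurable
  refine (int_rpow8 hα a b).mono_fun ?_ ?_
  · exact ((by fun_prop : Measurable (fun y : ℝ => y ^ (α - 1))).mul hm).aestronglyMeasurable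
  · refine Eventually.of_forall fun y => ?_
    simp only [norm_mul]
    have h1 : ‖1 - distF μ y‖ ≤ 1 := by
      rw [Real.norm_eq_abs, abs_le]
      constructor <;> linarith [distF_le_one8 μ y, distF_nonneg8 μ y]
    exact mul_le_of_le_one_right (norm_nonneg _) h1

lemma W_eq8 (μ : Measure ℝ) (α : ℝ) {x : ℝ} (hx : 0 ≤ x) :
    Wtr μ α x = ∫ y in (0:ℝ)..x, y ^ (α - 1) * (1 - distF μ y) := by
  rw [Wtr, intervalIntegral.integral_of_le hx]

lemma W_nonneg8 (μ : Measure ℝ) [IsProbabilityMeasure μ] (α x : ℝ) : 0 ≤ Wtr μ α x := by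
  refine setIntegral_nonneg measurableSet_Ioc fun y hy => ?_
  exact mul_nonneg (Real.rpow_nonneg hy.1.le _) (by linarith [distF_le_one8 μ y])

lemma W_bounds8 (μ : Measure ℝ) [IsProbabilityMeasure μ] {α : ℝ} (hα : 0 < α) {a b : ℝ}
    (ha : 0 < a) (hab : a ≤ b) :
    (1 - distF μ b) * ((b ^ α - a ^ α) / α) ≤ Wtr μ α b - Wtr μ α a ∧
    Wtr μ α b - Wtr μ α a ≤ (1 - distF μ a) * ((b ^ α - a ^ α) / α) := by
  have hb : 0 ≤ b := ha.le.trans hab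
  have hI : ∫ y in a..b, y ^ (α - 1) = (b ^ α - a ^ α) / α := by
    rw [integral_rpow (Or.inl (by linarith))]; simp
  rw [W_eq8 μ α hb, W_eq8 μ α ha.le,
    intervalIntegral.integral_interval_sub_left (int_W8 μ hα _ _) (int_W8 μ hα _ _), ← hI]
  constructor
  · rw [← intervalIntegral.integral_const_mul]
    refine intervalIntegral.integral_mono_on hab ((int_rpow8 hα a b).const_mul _)
      (int_W8 μ hα _ _) fun y hy => ?_
    rw [mul_comm]
    have := distF_mono8 μ hy.2
    exact mul_le_mul_of_nonneg_left (by linarith) (Real.rpow_nonneg (ha.le.trans hy.1) _)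
  · rw [← intervalIntegral.integral_const_mul]
    refine intervalIntegral.integral_mono_on hab (int_W8 μ hα _ _)
      ((int_rpow8 hα a b).const_mul _) fun y hy => ?_
    rw [mul_comm (1 - distF μ a)]
    have := distF_mono8 μ hy.1
    exact mul_le_mul_of_nonneg_left (by linarith) (Real.rpow_nonneg (ha.le.trans hy.1) _)

lemma H_eq8 (μ : Measure ℝ) [IsProbabilityMeasure μ] (hsupp : μ (Iic 0) = 0) {α : ℝ}
    (hα : 0 < α) {x : ℝ} (hx : 0 < x) :
    Htr μ α x = α * Wtr μ α x - x ^ α * (1 - distF μ x) := by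
  have hpos : ∀ᵐ y ∂μ, 0 < y := by
    rw [ae_iff]; simpa [Iic] using hsupp
  have h0 : 0 ≤ᵐ[μ] fun y => min y x := by
    filter_upwards [hpos] with y hy
    exact le_min hy.le hx.le
  have key := lintegral_rpow_eq_lintegral_meas_lt_mul μ (f := fun y => min y x) h0
    (by fun_prop) hα
  have hbd : ∀ᵐ y ∂μ, ‖(min y x) ^ α‖ ≤ x ^ α := by
    filter_upwards [hpos] with y hy
    have : 0 ≤ min y x := le_min hy.le hx.le
    rw [Real.norm_of_nonneg (Real.rpow_nonneg this _)]
    exact Real.rpow_le_rpow this (min_le_right _ _) hα.le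
  have hint : Integrable (fun y => (min y x) ^ α) μ :=
    Integrable.of_bound (by fun_prop (disch := exact hα.le)) _ hbd
  have hnn : 0 ≤ᵐ[μ] fun y => (min y x) ^ α := by
    filter_upwards [h0] with y hy
    exact Real.rpow_nonneg hy _
  rw [← ofReal_integral_eq_lintegral_ofReal hint hnn] at key
  have hR : ∫⁻ t in Ioi (0:ℝ), μ {a | t < min a x} * ENNReal.ofReal (t ^ (α - 1))
      = ENNReal.ofReal (Wtr μ α x) := by
    rw [Wtr, ofReal_integral_eq_lintegral_ofReal]
    · rw [← lintegral_indicator measurableSet_Ioi, ← lintegral_indicator measurableSet_Ioc]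
      refine lintegral_congr_ae ?_
      have hne : ∀ᵐ t : ℝ, t ≠ x := by simp [ae_iff]
      filter_upwards [hne] with t htx
      by_cases ht : 0 < t
      · by_cases h : t < x
        · have e : {a | t < min a x} = Ioi t := by
            ext a; simp [h]
          rw [indicator_of_mem (by exact ht), indicator_of_mem (by exact ⟨ht, h.le⟩), e,
            tail_eq8, mul_comm, ENNReal.ofReal_mul (Real.rpow_nonneg ht.le _)]
        · have e : {a | t < min a x} = ∅ := by
            ext a; simp [h]
          have h2 : t ∉ Ioc 0 x := fun h3 => h (lt_of_le_of_ne h3.2 htx)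
          rw [indicator_of_mem (by exact ht), indicator_of_notMem h2, e]
          simp
      · rw [indicator_of_notMem (by exact ht), indicator_of_notMem (by exact fun h => ht h.1)]
    · exact (intervalIntegrable_iff_integrableOn_Ioc_of_le hx.le).1 (int_W8 μ hα 0 x)
    · filter_upwards [ae_restrict_mem measurableSet_Ioc] with y hy
      exact mul_nonneg (Real.rpow_nonneg hy.1.le _) (by linarith [distF_le_one8 μ y])
  rw [hR, ← ENNReal.ofReal_mul hα.le, ENNReal.ofReal_eq_ofReal_iff
    (integral_nonneg_of_ae hnn) (mul_nonneg hα.le (W_nonneg8 μ α x))] at key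
  rw [← key, ← integral_add_compl (measurableSet_Iic (a := x)) hint, Htr]
  have e1 : ∫ y in Iic x, (min y x) ^ α ∂μ = ∫ y in Iic x, y ^ α ∂μ :=
    setIntegral_congr_fun measurableSet_Iic fun y hy => by
      simp only [min_eq_left (show y ≤ x from hy)]
  have e2 : ∫ y in (Iic x)ᶜ, (min y x) ^ α ∂μ = ∫ y in (Iic x)ᶜ, x ^ α ∂μ :=
    setIntegral_congr_fun measurableSet_Iic.compl fun y hy => by
      have : x ≤ y := le_of_lt (by simpa using hy)
      simp only [min_eq_right this]
  have e3 : μ.real (Iic x)ᶜ = 1 - distF μ x := by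
    rw [compl_Iic, Measure.real, tail_eq8, ENNReal.toReal_ofReal]
    linarith [distF_le_one8 μ x]
  rw [e1, e2, setIntegral_const, e3, smul_eq_mul]
  ring

lemma q_lim8 {α θ : ℝ} (hα : 0 < α) :
    Tendsto (fun l : ℝ => α * (l ^ θ - 1) / (l ^ α - 1)) (𝓝[≠] 1) (𝓝 θ) := by
  have d : ∀ p : ℝ, Tendsto (fun l : ℝ => (l ^ p - 1) / (l - 1)) (𝓝[≠] 1) (𝓝 p) := by
    intro p
    have h := (Real.hasDerivAt_rpow_const (x := 1) (p := p) (Or.inl one_ne_zero)).tendsto_slope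
    simp only [Real.one_rpow, mul_one] at h
    refine h.congr fun l => ?_
    simp [slope_def_field]
  have h := ((d θ).const_mul α).div (d α) hα.ne'
  rw [mul_div_cancel_left₀ _ hα.ne'] at h
  refine h.congr' ?_
  filter_upwards [self_mem_nhdsWithin] with l hl
  have : l - 1 ≠ 0 := sub_ne_zero.2 hl
  simp only [Pi.div_apply]
  rw [← mul_div_assoc, div_div_div_cancel_right₀ this]

lemma tail_lim8 (μ : Measure ℝ) [IsProbabilityMeasure μ] {α θ : ℝ} (hα : 0 < α)
    (hW : RegVary (Wtr μ α) θ) (hpos : ∀ᶠ x in atTop, 0 < Wtr μ α x) :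
    Tendsto (fun x => x ^ α * (1 - distF μ x) / Wtr μ α x) atTop (𝓝 θ) := by
  have hl : ∀ l : ℝ, 0 < l → Tendsto
      (fun x => α * (Wtr μ α (l * x) / Wtr μ α x - 1) / (l ^ α - 1)) atTop
      (𝓝 (α * (l ^ θ - 1) / (l ^ α - 1))) := fun l h =>
    (((hW l h).sub_const 1).const_mul α).div_const _
  rw [tendsto_order]
  constructor
  · intro a ha
    have h1 := ((q_lim8 (θ := θ) hα).mono_left
      (nhdsWithin_mono (s := Ioi 1) 1 (fun l h => ne_of_gt h))).eventually_const_lt ha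
    obtain ⟨l, hla, hl1⟩ := (h1.and (self_mem_nhdsWithin (s := Ioi (1:ℝ)))).exists
    have hl1 : 1 < l := hl1
    have hl0 : 0 < l := by linarith
    filter_upwards [(hl l hl0).eventually_const_lt hla, hpos, eventually_gt_atTop 0]
      with x hx hWx hx0
    refine hx.trans_le ?_
    have hb := (W_bounds8 μ hα hx0 (show x ≤ l * x by nlinarith)).2
    have hl2 : 0 < l ^ α - 1 := by linarith [Real.one_lt_rpow hl1 hα]
    rw [Real.mul_rpow hl0.le hx0.le, mul_div_assoc', le_div_iff₀ hα] at hb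
    rw [div_sub_one hWx.ne', mul_div_assoc', div_div, div_le_div_iff₀ (by positivity) hWx]
    nlinarith [mul_le_mul_of_nonneg_right hb hWx.le]
  · intro a ha
    have h1 := ((q_lim8 (θ := θ) hα).mono_left
      (nhdsWithin_mono (s := Iio 1) 1 (fun l h => ne_of_lt h))).eventually_lt_const ha
    obtain ⟨l, ⟨hla, hl1⟩, hl0⟩ := ((h1.and (self_mem_nhdsWithin (s := Iio (1:ℝ)))).and
      (nhdsWithin_le_nhds (lt_mem_nhds (zero_lt_one' ℝ)))).exists
    have hl1 : l < 1 := hl1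
    have hl0 : 0 < l := hl0
    filter_upwards [(hl l hl0).eventually_lt_const hla, hpos, eventually_gt_atTop 0]
      with x hx hWx hx0
    refine lt_of_le_of_lt ?_ hx
    have hb := (W_bounds8 μ hα (mul_pos hl0 hx0) (show l * x ≤ x by nlinarith)).1
    have hl2 : 0 < 1 - l ^ α := by linarith [Real.rpow_lt_one hl0.le hl1 hα]
    rw [Real.mul_rpow hl0.le hx0.le, mul_div_assoc', div_le_iff₀ hα] at hb
    rw [div_sub_one hWx.ne', mul_div_assoc', div_div, ← neg_sub 1 (l ^ α), mul_neg,
      ← neg_div_neg_eq (α * _), neg_neg, div_le_div_iff₀ hWx (by positivity)]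
    nlinarith [mul_le_mul_of_nonneg_right hb hWx.le]

theorem stmt8 (μ : Measure ℝ) [IsProbabilityMeasure μ] (hsupp : μ (Iic 0) = 0)
    (α θ : ℝ) (hα : 0 < α) (hθ : 0 ≤ θ) (hθα : θ < α)
    (hW : RegVary (Wtr μ α) θ) :
    RegVary (Htr μ α) θ := by
  have hpos : ∀ᶠ x in atTop, 0 < Wtr μ α x := by
    have h := hW 1 one_pos
    rw [Real.one_rpow] at h
    filter_upwards [h.eventually_const_lt one_half_lt_one] with x hx
    refine lt_of_le_of_ne (W_nonneg8 μ α x) fun h0 => ?_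
    rw [← h0, div_zero] at hx
    norm_num at hx
  have hH : Tendsto (fun x => Htr μ α x / Wtr μ α x) atTop (𝓝 (α - θ)) := by
    refine ((tail_lim8 μ hα hW hpos).const_sub α).congr' ?_
    filter_upwards [hpos, eventually_gt_atTop 0] with x hx hx0
    rw [H_eq8 μ hsupp hα hx0]
    field_simp
  have hne : α - θ ≠ 0 := by linarith
  intro t ht
  have htx : Tendsto (fun x : ℝ => t * x) atTop atTop := tendsto_id.const_mul_atTop ht
  have h := ((hH.comp htx).mul (hW t ht)).div hH hne
  rw [mul_div_cancel_left₀ _ hne] at h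
  refine h.congr' ?_
  filter_upwards [hpos, htx.eventually hpos] with x h1 h2
  simp only [Pi.div_apply, Function.comp]
  field_simp
end

section
/- Let α>0 and 0≤θ<α. Then H_α(x)=∫_{[0,x]} y^α dF(y) is regularly varying with index θ at infinity if and only if x^α (1−F(x)) / H_α(x) → θ/(α−θ) as x→∞. -/
open MeasureTheory Set Filter Topology

lemma aux_slope (c : ℝ) : Tendsto (fun h : ℝ => (Real.exp (c * h) - 1) / h) (𝓝[≠] 0) (𝓝 c) := by
  have h1 : HasDerivAt (fun h : ℝ => Real.exp (c * h)) (Real.exp (c * 0) * (c * 1)) 0 :=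
    ((hasDerivAt_id (0:ℝ)).const_mul c).exp
  have h2 := h1.tendsto_slope
  simp only [mul_zero, Real.exp_zero, mul_one, one_mul] at h2
  refine h2.congr (fun h => ?_)
  simp [slope_def_field]

lemma aux_pow_lim (α θ L : ℝ) (hα : 0 < α) :
    Tendsto (fun n : ℕ => (1 + (Real.exp (α * (L / n)) - 1) * (θ / α)) ^ n) atTop
      (𝓝 (Real.exp (θ * L))) := by
  apply Real.tendsto_one_add_pow_exp_of_tendsto
  have h1 : Tendsto (fun n : ℕ => ((n:ℝ))⁻¹) atTop (𝓝[≠] 0) := by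
    rw [tendsto_nhdsWithin_iff]
    refine ⟨tendsto_inv_atTop_nhds_zero_nat, ?_⟩
    filter_upwards [eventually_gt_atTop 0] with n hn
    have : (n:ℝ) ≠ 0 := by positivity
    simpa using this
  have h2 := ((aux_slope (α * L)).comp h1).mul_const (θ / α)
  have e : α * L * (θ / α) = θ * L := by field_simp
  rw [e] at h2
  refine h2.congr (fun n => ?_)
  simp only [Function.comp, div_inv_eq_mul]
  rw [show α * L * (n:ℝ)⁻¹ = α * (L / n) by ring]
  ring

lemma fwd_upper (H T : ℝ → ℝ) (α t q A M x0 : ℝ) (ht : 1 < t) (hA : A = t ^ α)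
    (hA1 : 0 < A) (hM0 : 0 ≤ M) (hM : A * M = A * (q - 1) + q * M) (hx0 : 0 < x0)
    (hT : Tendsto T atTop (𝓝 0)) (hH : ∀ x, 0 ≤ H x)
    (hI : ∀ x y, 0 < x → x ≤ y → x ^ α * (T x - T y) ≤ H y - H x ∧
      H y - H x ≤ y ^ α * (T x - T y))
    (hq : ∀ x, x0 ≤ x → H (t * x) ≤ q * H x) :
    ∀ x, x0 ≤ x → x ^ α * T x ≤ M * H x := by
  have key : ∀ n : ℕ, ∀ x, x0 ≤ x → x ^ α * (T x - T (t ^ n * x)) ≤ M * H x := by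
    intro n
    induction n with
    | zero => intro x hx; simp; exact mul_nonneg hM0 (hH x)
    | succ n ih =>
      intro x hx
      have hx' : 0 < x := hx0.trans_le hx
      have hle : x ≤ t * x := by nlinarith
      have h1 := (hI x (t * x) hx' hle).1
      have h2 := ih (t * x) (hx.trans hle)
      have h3 := mul_le_mul_of_nonneg_left (hq x hx) hM0
      have h4 := mul_le_mul_of_nonneg_left (h1.trans (sub_le_sub_right (hq x hx) _)) hA1.le
      rw [Real.mul_rpow (by linarith) hx'.le, ← hA] at h2
      have e : t ^ (n + 1) * x = t ^ n * (t * x) := by ring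
      rw [e]
      refine le_of_mul_le_mul_left ?_ hA1
      have h5 : A * M * H x = (A * (q - 1) + q * M) * H x := by rw [hM]
      nlinarith
  intro x hx
  have hx' : 0 < x := hx0.trans_le hx
  have l1 : Tendsto (fun n : ℕ => t ^ n * x) atTop atTop :=
    (tendsto_pow_atTop_atTop_of_one_lt ht).atTop_mul_const hx'
  have l2 : Tendsto (fun n : ℕ => x ^ α * (T x - T (t ^ n * x))) atTop
      (𝓝 (x ^ α * (T x - 0))) := ((hT.comp l1).const_sub (T x)).const_mul _
  rw [sub_zero] at l2
  exact le_of_tendsto' l2 (fun n => key n x hx)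

lemma fwd_lower (H T : ℝ → ℝ) (α t p A M x0 : ℝ) (ht : 1 < t) (hA : A = t ^ α)
    (hp0 : 0 ≤ p) (hpA : p < A) (hM0 : 0 ≤ M) (hM : A * M = (p - 1) + p * M) (hx0 : 0 < x0)
    (hTn : ∀ x, 0 ≤ T x) (hH : ∀ x, 0 ≤ H x)
    (hI : ∀ x y, 0 < x → x ≤ y → x ^ α * (T x - T y) ≤ H y - H x ∧
      H y - H x ≤ y ^ α * (T x - T y))
    (hq : ∀ x, x0 ≤ x → p * H x ≤ H (t * x)) :
    ∀ x, x0 ≤ x → M * H x ≤ x ^ α * T x := by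
  have hA0 : 0 < A := hp0.trans_lt hpA
  have hc0 : 0 ≤ p / A := div_nonneg hp0 hA0.le
  have hc1 : p / A < 1 := (div_lt_one hA0).2 hpA
  have key : ∀ n : ℕ, ∀ x, x0 ≤ x → M * (1 - (p / A) ^ n) * H x ≤ x ^ α * T x := by
    intro n
    induction n with
    | zero =>
      intro x hx
      have hx' : 0 < x := hx0.trans_le hx
      simp
      exact mul_nonneg (Real.rpow_nonneg hx'.le _) (hTn x)
    | succ n ih =>
      intro x hx
      have hx' : 0 < x := hx0.trans_le hx
      have hle : x ≤ t * x := by nlinarith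
      have h1 := (hI x (t * x) hx' hle).2
      have h2 := ih (t * x) (hx.trans hle)
      have hcn : (p / A) ^ n ≤ 1 := pow_le_one₀ hc0 hc1.le
      have h3 := mul_le_mul_of_nonneg_left (hq x hx)
        (mul_nonneg hM0 (sub_nonneg.2 hcn))
      rw [Real.mul_rpow (by linarith) hx'.le, ← hA] at h2 h1
      have h4 := hq x hx
      refine le_of_mul_le_mul_left ?_ hA0
      have h5 : A * (M * (1 - (p / A) ^ (n + 1)) * H x)
          = (p - 1) * H x + M * (1 - (p / A) ^ n) * (p * H x) := by
        have : A * (p / A) ^ (n + 1) = p * (p / A) ^ n := by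
          rw [pow_succ]; field_simp
        linear_combination H x * hM - M * H x * this
      rw [h5]
      nlinarith
  intro x hx
  have l2 : Tendsto (fun n : ℕ => M * (1 - (p / A) ^ n) * H x) atTop
      (𝓝 (M * (1 - 0) * H x)) :=
    (((tendsto_pow_atTop_nhds_zero_of_lt_one hc0 hc1).const_sub 1).const_mul M).mul_const _
  rw [sub_zero, mul_one] at l2
  exact le_of_tendsto' l2 (fun n => key n x hx)

lemma lim_M (α θ : ℝ) (hθα : θ < α) :
    Tendsto (fun h : ℝ => (Real.exp (θ * h) - 1) / (Real.exp (α * h) - Real.exp (θ * h)))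
      (𝓝[>] 0) (𝓝 (θ / (α - θ))) := by
  have hle : 𝓝[>] (0:ℝ) ≤ 𝓝[≠] 0 := nhdsWithin_mono _ (fun x hx => ne_of_gt hx)
  have h1 := (aux_slope θ).mono_left hle
  have h2 := (aux_slope α).mono_left hle
  refine (h1.div (h2.sub h1) (by linarith)).congr' ?_
  filter_upwards [self_mem_nhdsWithin] with h hh
  have hh : 0 < h := hh
  simp only [Pi.div_apply, Pi.sub_apply]
  rw [← sub_div, div_div_div_cancel_right₀ hh.ne']
  congr 1
  ring

lemma lim_AM (α θ : ℝ) (hθα : θ < α) :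
    Tendsto (fun h : ℝ => Real.exp (α * h) * (Real.exp (θ * h) - 1) /
      (Real.exp (α * h) - Real.exp (θ * h)))
      (𝓝[>] 0) (𝓝 (θ / (α - θ))) := by
  have h0 : Tendsto (fun h : ℝ => Real.exp (α * h)) (𝓝[>] 0) (𝓝 1) := by
    have : Continuous (fun h : ℝ => Real.exp (α * h)) := by fun_prop
    have := this.tendsto 0
    simp only [mul_zero, Real.exp_zero] at this
    exact this.mono_left nhdsWithin_le_nhds
  have := h0.mul (lim_M α θ hθα)
  rw [one_mul] at this
  refine this.congr (fun h => ?_)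
  rw [mul_div_assoc]

lemma forward (H T : ℝ → ℝ) (α θ : ℝ) (hθ : 0 ≤ θ) (hθα : θ < α)
    (hTn : ∀ x, 0 ≤ T x) (hH : ∀ x, 0 ≤ H x) (hHp : ∀ᶠ x in atTop, 0 < H x)
    (hT : Tendsto T atTop (𝓝 0))
    (hI : ∀ x y, 0 < x → x ≤ y → x ^ α * (T x - T y) ≤ H y - H x ∧
      H y - H x ≤ y ^ α * (T x - T y))
    (hR : RegVary H θ) :
    Tendsto (fun x => x ^ α * T x / H x) atTop (𝓝 (θ / (α - θ))) := by
  have hpos : ∀ h : ℝ, 0 < h → Real.exp (θ * h) < Real.exp (α * h) := fun h hh =>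
    Real.exp_lt_exp.2 (by nlinarith)
  rw [tendsto_order]
  constructor
  · intro a ha
    rcases lt_or_ge a 0 with ha0 | ha0
    · filter_upwards [eventually_gt_atTop 0] with x hx
      exact ha0.trans_le (div_nonneg (mul_nonneg (Real.rpow_nonneg hx.le _) (hTn x)) (hH x))
    obtain ⟨h, hah, hh⟩ := (((lim_M α θ hθα).eventually (lt_mem_nhds ha)).and
      self_mem_nhdsWithin).exists
    have hh : 0 < h := hh
    have hlt := hpos h hh
    have hc : ContinuousAt (fun p : ℝ => (p - 1) / (Real.exp (α * h) - p)) (Real.exp (θ * h)) :=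
      ContinuousAt.div (by fun_prop) (by fun_prop) (by linarith)
    have e1 : ∀ᶠ p in 𝓝[<] Real.exp (θ * h), a < (p - 1) / (Real.exp (α * h) - p) :=
      (hc.tendsto.mono_left nhdsWithin_le_nhds).eventually (lt_mem_nhds hah)
    obtain ⟨p, hp1, hp2⟩ := (e1.and self_mem_nhdsWithin).exists
    have hp2 : p < Real.exp (θ * h) := hp2
    have hpA : 0 < Real.exp (α * h) - p := by linarith
    have hp1' : 0 < p - 1 := by
      have := ha0.trans_lt hp1
      rwa [div_pos_iff_of_pos_right hpA] at this
    have ev := (hR (Real.exp h) (Real.exp_pos h)).eventually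
      (lt_mem_nhds (a := p) (by rw [← Real.exp_mul, mul_comm]; exact hp2))
    obtain ⟨x0, hx0⟩ := eventually_atTop.1 (ev.and hHp)
    have := fwd_lower H T α (Real.exp h) p (Real.exp (α * h)) ((p - 1) / (Real.exp (α * h) - p))
      (max x0 1) (Real.one_lt_exp_iff.2 hh) (by rw [← Real.exp_mul, mul_comm]) (by linarith)
      (by linarith) (div_nonneg hp1'.le hpA.le)
      (by field_simp; ring) (by positivity) hTn hH hI
      (fun x hx => by
        obtain ⟨h1, h2⟩ := hx0 x ((le_max_left _ _).trans hx)
        exact ((lt_div_iff₀ h2).1 h1).le)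
    filter_upwards [eventually_ge_atTop (max x0 1), hHp] with x hx hHx
    refine hp1.trans_le ?_
    rw [le_div_iff₀ hHx]
    exact this x hx
  · intro b hb
    obtain ⟨h, hah, hh⟩ := (((lim_AM α θ hθα).eventually (gt_mem_nhds hb)).and
      self_mem_nhdsWithin).exists
    have hh : 0 < h := hh
    have hlt := hpos h hh
    have hc : ContinuousAt (fun p : ℝ => Real.exp (α * h) * (p - 1) / (Real.exp (α * h) - p))
        (Real.exp (θ * h)) :=
      ContinuousAt.div (by fun_prop) (by fun_prop) (by linarith)
    have e1 : ∀ᶠ p in 𝓝[>] Real.exp (θ * h),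
        Real.exp (α * h) * (p - 1) / (Real.exp (α * h) - p) < b :=
      (hc.tendsto.mono_left nhdsWithin_le_nhds).eventually (gt_mem_nhds hah)
    have e2 : ∀ᶠ p in 𝓝[>] Real.exp (θ * h), p < Real.exp (α * h) :=
      nhdsWithin_le_nhds (gt_mem_nhds hlt)
    obtain ⟨p, ⟨hp1, hp3⟩, hp2⟩ := ((e1.and e2).and self_mem_nhdsWithin).exists
    have hp2 : Real.exp (θ * h) < p := hp2
    have hpA : 0 < Real.exp (α * h) - p := by linarith
    have hp1' : 0 < p - 1 := by
      have : 1 ≤ Real.exp (θ * h) := Real.one_le_exp (by positivity)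
      linarith
    have ev := (hR (Real.exp h) (Real.exp_pos h)).eventually
      (eventually_lt_nhds (b := p) (by rw [← Real.exp_mul, mul_comm]; exact hp2))
    obtain ⟨x0, hx0⟩ := eventually_atTop.1 (ev.and hHp)
    have := fwd_upper H T α (Real.exp h) p (Real.exp (α * h))
      (Real.exp (α * h) * (p - 1) / (Real.exp (α * h) - p))
      (max x0 1) (Real.one_lt_exp_iff.2 hh) (by rw [← Real.exp_mul, mul_comm]) (Real.exp_pos _)
      (div_nonneg (mul_nonneg (Real.exp_pos _).le hp1'.le) hpA.le)
      (by field_simp; ring) (by positivity) hT hH hI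
      (fun x hx => by
        obtain ⟨h1, h2⟩ := hx0 x ((le_max_left _ _).trans hx)
        exact ((div_lt_iff₀ h2).1 h1).le)
    filter_upwards [eventually_ge_atTop (max x0 1), hHp] with x hx hHx
    refine lt_of_le_of_lt ?_ hp1
    rw [div_le_iff₀ hHx]
    exact this x hx

lemma U_ineq (H T : ℝ → ℝ) (α : ℝ)
    (hI : ∀ x y, 0 < x → x ≤ y → x ^ α * (T x - T y) ≤ H y - H x ∧
      H y - H x ≤ y ^ α * (T x - T y)) (x s : ℝ) (hx : 0 < x) (hs : 0 < s) :
    H (s * x) + (s * x) ^ α * T (s * x) ≤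
      H x + x ^ α * T x + (s ^ α - 1) * (x ^ α * T x) := by
  rcases le_total x (s * x) with h | h
  · have := (hI _ _ hx h).2
    rw [Real.mul_rpow hs.le hx.le] at *
    nlinarith
  · have := (hI _ _ (mul_pos hs hx) h).1
    rw [Real.mul_rpow hs.le hx.le] at *
    nlinarith

lemma U_up (U V : ℝ → ℝ) (α θ : ℝ) (hα : 0 < α) (hθ : 0 ≤ θ) (hθα : θ < α)
    (hU : ∀ᶠ x in atTop, 0 < U x) (hV : Tendsto V atTop (𝓝 (θ / α)))
    (hI : ∀ s, 0 < s → ∀ᶠ x in atTop, U (s * x) ≤ (1 + (s ^ α - 1) * V x) * U x)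
    (L b : ℝ) (hb : Real.exp (θ * L) < b) :
    ∀ᶠ x in atTop, U (Real.exp L * x) / U x < b := by
  obtain ⟨n, hn, hn0⟩ := (((aux_pow_lim α θ L hα).eventually (gt_mem_nhds hb)).and
    (eventually_gt_atTop 0)).exists
  set c0 := 1 + (Real.exp (α * (L / n)) - 1) * (θ / α) with hc0
  have hc0p : 0 < c0 := by
    have h1 : θ / α < 1 := (div_lt_one hα).2 hθα
    have h2 : 0 ≤ θ / α := by positivity
    have h3 := mul_nonneg (Real.exp_pos (α * (L / n))).le h2
    rw [hc0]; nlinarith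
  have e1 : ∀ᶠ c in 𝓝[>] c0, c ^ n < b :=
    (((continuous_pow n).tendsto c0).mono_left nhdsWithin_le_nhds).eventually (gt_mem_nhds hn)
  obtain ⟨c, hc1, hc2⟩ := (e1.and self_mem_nhdsWithin).exists
  have hc2 : c0 < c := hc2
  set s := Real.exp (L / n) with hs
  have hs0 : 0 < s := Real.exp_pos _
  have hsα : s ^ α = Real.exp (α * (L / n)) := by rw [hs, ← Real.exp_mul, mul_comm]
  have hsn : s ^ n = Real.exp L := by
    rw [hs, ← Real.exp_nat_mul]
    congr 1
    have : (n:ℝ) ≠ 0 := by positivity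
    field_simp
  have step : ∀ᶠ x in atTop, U (s * x) ≤ c * U x := by
    have hlim : Tendsto (fun x => 1 + (s ^ α - 1) * V x) atTop (𝓝 c0) := by
      rw [hc0, ← hsα]
      exact (hV.const_mul _).const_add 1
    filter_upwards [hU, hI s hs0, hlim.eventually (gt_mem_nhds hc2)] with x h1 h2 h3
    exact h2.trans (mul_le_mul_of_nonneg_right h3.le h1.le)
  have key : ∀ k : ℕ, ∀ᶠ x in atTop, U (s ^ k * x) ≤ c ^ k * U x := by
    intro k
    induction k with
    | zero => simp
    | succ k ih =>
      have l1 : Tendsto (fun x : ℝ => s ^ k * x) atTop atTop :=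
        tendsto_id.const_mul_atTop (pow_pos hs0 k)
      filter_upwards [ih, l1.eventually step] with x h1 h2
      have e : s ^ (k + 1) * x = s * (s ^ k * x) := by ring
      rw [e, pow_succ' c, mul_assoc]
      exact h2.trans (mul_le_mul_of_nonneg_left h1 (hc0p.trans hc2).le)
  filter_upwards [key n, hU] with x h1 h2
  rw [← hsn, div_lt_iff₀ h2]
  exact h1.trans_lt (mul_lt_mul_of_pos_right hc1 h2)

lemma U_reg (U V : ℝ → ℝ) (α θ : ℝ) (hα : 0 < α) (hθ : 0 ≤ θ) (hθα : θ < α)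
    (hU : ∀ᶠ x in atTop, 0 < U x) (hV : Tendsto V atTop (𝓝 (θ / α)))
    (hI : ∀ s, 0 < s → ∀ᶠ x in atTop, U (s * x) ≤ (1 + (s ^ α - 1) * V x) * U x) :
    RegVary U θ := by
  intro t ht
  have key := U_up U V α θ hα hθ hθα hU hV hI
  have et : t = Real.exp (Real.log t) := (Real.exp_log ht).symm
  generalize Real.log t = L at et
  subst et
  have l1 : Tendsto (fun x : ℝ => Real.exp L * x) atTop atTop :=
    tendsto_id.const_mul_atTop ht
  rw [← Real.exp_mul, mul_comm L θ, tendsto_order]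
  refine ⟨fun a ha => ?_, fun b hb => key L b hb⟩
  rcases le_or_gt a 0 with ha0 | ha0
  · filter_upwards [hU, l1.eventually hU] with x h1 h2
    exact ha0.trans_lt (div_pos h2 h1)
  · have h3 := key (-L) (1 / a) (by
      rw [mul_neg, Real.exp_neg, ← one_div]
      exact one_div_lt_one_div_of_lt ha0 ha)
    filter_upwards [hU, l1.eventually hU, l1.eventually h3] with x h1 h2 h4
    rw [← mul_assoc, ← Real.exp_add, neg_add_cancel, Real.exp_zero, one_mul,
      div_lt_div_iff₀ h2 ha0] at h4
    rw [lt_div_iff₀ h1]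
    linarith

lemma backward (H T : ℝ → ℝ) (α θ : ℝ) (hα : 0 < α) (hθ : 0 ≤ θ) (hθα : θ < α)
    (hTn : ∀ x, 0 ≤ T x) (hHp : ∀ᶠ x in atTop, 0 < H x)
    (hI : ∀ x y, 0 < x → x ≤ y → x ^ α * (T x - T y) ≤ H y - H x ∧
      H y - H x ≤ y ^ α * (T x - T y))
    (hR : Tendsto (fun x => x ^ α * T x / H x) atTop (𝓝 (θ / (α - θ)))) :
    RegVary H θ := by
  set R : ℝ → ℝ := fun x => x ^ α * T x / H x with hRdef
  have hαθ : 0 < α - θ := by linarith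
  have hlimne : 1 + θ / (α - θ) ≠ 0 := by positivity
  have hV : Tendsto (fun x => R x / (1 + R x)) atTop (𝓝 (θ / α)) := by
    have := hR.div (hR.const_add 1) hlimne
    have e : θ / (α - θ) / (1 + θ / (α - θ)) = θ / α := by
      field_simp
      rw [sub_add_cancel]
    rw [e] at this
    exact this
  have hUp : ∀ᶠ x in atTop, 0 < H x + x ^ α * T x := by
    filter_upwards [hHp, eventually_gt_atTop 0] with x h1 h2
    have := mul_nonneg (Real.rpow_nonneg h2.le α) (hTn x)
    linarith
  have hUR : ∀ᶠ x in atTop, H x + x ^ α * T x = H x * (1 + R x) ∧ 0 < 1 + R x := by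
    filter_upwards [hHp, hUp] with x h1 h2
    have : H x + x ^ α * T x = H x * (1 + R x) := by
      simp only [hRdef]; field_simp
    refine ⟨this, ?_⟩
    rw [this] at h2
    exact pos_of_mul_pos_right h2 h1.le
  have hreg := U_reg (fun x => H x + x ^ α * T x) (fun x => R x / (1 + R x)) α θ hα hθ hθα hUp hV
    (fun s hs => by
      filter_upwards [hHp, hUR, eventually_gt_atTop 0] with x h1 h2 h3
      refine (U_ineq H T α hI x s h3 hs).trans (le_of_eq ?_)
      rw [h2.1]
      have : x ^ α * T x = H x * R x := by simp only [hRdef]; field_simp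
      rw [this]
      have := h2.2.ne'
      field_simp)
  intro t ht
  have l1 : Tendsto (fun x : ℝ => t * x) atTop atTop := tendsto_id.const_mul_atTop ht
  have l2 : Tendsto (fun x => (1 + R x) / (1 + R (t * x))) atTop (𝓝 1) := by
    have := (hR.const_add 1).div ((hR.comp l1).const_add 1) hlimne
    rw [div_self hlimne] at this
    exact this
  have l3 := (hreg t ht).mul l2
  rw [mul_one] at l3
  refine l3.congr' ?_
  filter_upwards [hHp, hUR, l1.eventually hUR, l1.eventually hHp] with x h1 h2 h3 h4
  rw [h2.1, h3.1]
  have := h2.2.ne'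
  have := h3.2.ne'
  field_simp

lemma meas_ineq (μ : Measure ℝ) [IsProbabilityMeasure μ] (hsupp : μ (Iic 0) = 0)
    (α : ℝ) (hα : 0 < α) (x y : ℝ) (hx : 0 < x) (hxy : x ≤ y) :
    x ^ α * ((1 - distF μ x) - (1 - distF μ y)) ≤ Htr μ α y - Htr μ α x ∧
      Htr μ α y - Htr μ α x ≤ y ^ α * ((1 - distF μ x) - (1 - distF μ y)) := by
  have hint : ∀ z, IntegrableOn (fun u : ℝ => u ^ α) (Iic z) μ := by
    intro z
    have h0 : IntegrableOn (fun u : ℝ => u ^ α) (Iic 0) μ := by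
      rw [IntegrableOn, Measure.restrict_eq_zero.2 hsupp]
      exact integrable_zero_measure
    have h1 : IntegrableOn (fun u : ℝ => u ^ α) (Icc 0 z) μ :=
      ((Real.continuous_rpow_const hα.le).continuousOn).integrableOn_compact isCompact_Icc
    refine (h0.union h1).mono_set ?_
    intro u hu
    rcases le_total u 0 with h | h
    · exact Or.inl h
    · exact Or.inr ⟨h, hu⟩
  have hH : Htr μ α y - Htr μ α x = ∫ u in Ioc x y, u ^ α ∂μ := by
    unfold Htr
    rw [← Iic_union_Ioc_eq_Iic hxy, setIntegral_union (Iic_disjoint_Ioc le_rfl) measurableSet_Ioc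
      (hint x) ((hint y).mono_set Ioc_subset_Iic_self)]
    ring
  have hF : (1 - distF μ x) - (1 - distF μ y) = μ.real (Ioc x y) := by
    unfold distF
    have : μ.real (Iic x ∪ Ioc x y) = μ.real (Iic x) + μ.real (Ioc x y) :=
      measureReal_union (Iic_disjoint_Ioc le_rfl) measurableSet_Ioc
    rw [Iic_union_Ioc_eq_Iic hxy] at this
    simp only [Measure.real] at *
    linarith
  rw [hH, hF]
  have hi := (hint y).mono_set (Ioc_subset_Iic_self (a := x))
  constructor
  · have := setIntegral_mono_on (μ := μ) (s := Ioc x y) (f := fun _ => x ^ α)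
      (g := fun u => u ^ α) (integrableOn_const (by finiteness)) hi measurableSet_Ioc
      (fun u hu => Real.rpow_le_rpow hx.le hu.1.le hα.le)
    rw [setIntegral_const, smul_eq_mul, mul_comm] at this
    exact this
  · have := setIntegral_mono_on (μ := μ) (s := Ioc x y) (g := fun _ => y ^ α)
      (f := fun u => u ^ α) hi (integrableOn_const (by finiteness)) measurableSet_Ioc
      (fun u hu => Real.rpow_le_rpow (hx.le.trans hu.1.le) hu.2 hα.le)
    rw [setIntegral_const, smul_eq_mul, mul_comm (μ.real _)] at this
    exact this

lemma F_lim (μ : Measure ℝ) [IsProbabilityMeasure μ] : Tendsto (distF μ) atTop (𝓝 1) := by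
  have h := tendsto_measure_Iic_atTop μ
  rw [measure_univ] at h
  have := (ENNReal.tendsto_toReal ENNReal.one_ne_top).comp h
  rw [ENNReal.toReal_one] at this
  exact this

lemma H_nonneg (μ : Measure ℝ) (hsupp : μ (Iic 0) = 0) (α x : ℝ) : 0 ≤ Htr μ α x := by
  unfold Htr
  apply integral_nonneg_of_ae
  apply ae_restrict_of_ae
  have : ∀ᵐ u ∂μ, u ∉ Iic (0:ℝ) := measure_eq_zero_iff_ae_notMem.1 hsupp
  filter_upwards [this] with u hu
  simp only [mem_Iic, not_le] at hu
  exact Real.rpow_nonneg hu.le _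

lemma H_pos (μ : Measure ℝ) [IsProbabilityMeasure μ] (hsupp : μ (Iic 0) = 0)
    (α : ℝ) (hα : 0 < α) : ∀ᶠ x in atTop, 0 < Htr μ α x := by
  -- F(δ) < F(x) for some small δ > 0 and all large x
  have hc : Tendsto (fun n : ℕ => μ (Iic (1 / ((n:ℝ) + 1)))) atTop
      (𝓝 (μ (⋂ n : ℕ, Iic (1 / ((n:ℝ) + 1))))) := by
    apply tendsto_measure_iInter_atTop
    · intro n; exact measurableSet_Iic.nullMeasurableSet
    · intro m n hmn
      apply Iic_subset_Iic.2
      exact one_div_le_one_div_of_le (by positivity) (by exact_mod_cast Nat.succ_le_succ hmn)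
    · exact ⟨0, by finiteness⟩
  have hcap : (⋂ n : ℕ, Iic (1 / ((n:ℝ) + 1))) = Iic 0 := by
    ext u
    simp only [mem_iInter, mem_Iic]
    constructor
    · intro h
      exact ge_of_tendsto' tendsto_one_div_add_atTop_nhds_zero_nat h
    · intro h n
      exact h.trans (by positivity)
  rw [hcap, hsupp] at hc
  obtain ⟨n, hn⟩ := (hc.eventually (eventually_lt_nhds (b := 1) (by norm_num))).exists
  set δ : ℝ := 1 / ((n:ℝ) + 1)
  have hδ : 0 < δ := by positivity
  have hFδ : distF μ δ < 1 := by
    unfold distF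
    have := (ENNReal.toReal_lt_toReal (by finiteness) ENNReal.one_ne_top).2 hn
    simpa using this
  filter_upwards [(F_lim μ).eventually (lt_mem_nhds hFδ), eventually_ge_atTop δ] with x h1 h2
  have h3 := (meas_ineq μ hsupp α hα δ x hδ h2).1
  have h4 := H_nonneg μ hsupp α δ
  have h5 : 0 < δ ^ α := Real.rpow_pos_of_pos hδ _
  have h6 : 0 < δ ^ α * ((1 - distF μ δ) - (1 - distF μ x)) := mul_pos h5 (by linarith)
  linarith

theorem stmt10 (μ : Measure ℝ) [IsProbabilityMeasure μ] (hsupp : μ (Iic 0) = 0)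
    (α θ : ℝ) (hα : 0 < α) (hθ : 0 ≤ θ) (hθα : θ < α) :
    RegVary (Htr μ α) θ ↔
      Tendsto (fun x => x ^ α * (1 - distF μ x) / Htr μ α x) atTop
        (𝓝 (θ / (α - θ))) := by
  have hTn : ∀ x, 0 ≤ 1 - distF μ x := fun x => by
    have : μ.real (Iic x) ≤ 1 := measureReal_le_one
    simp only [distF, Measure.real] at *
    linarith
  have hT : Tendsto (fun x => 1 - distF μ x) atTop (𝓝 0) := by
    simpa using (F_lim μ).const_sub 1
  exact ⟨forward (Htr μ α) (fun x => 1 - distF μ x) α θ hθ hθα hTn (H_nonneg μ hsupp α)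
      (H_pos μ hsupp α hα) hT (meas_ineq μ hsupp α hα),
    backward (Htr μ α) (fun x => 1 - distF μ x) α θ hα hθ hθα hTn
      (H_pos μ hsupp α hα) (meas_ineq μ hsupp α hα)⟩
end
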